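/- Fix an integer r ≥ 2. With a(n) := (1/3) n^{2/3}, define Σ_C(n) := Σ p(λ)^r, the sum over all partitions λ of n whose largest part T(λ) satisfies n − a(n) ≤ T(λ) ≤ n. Then n^r · Σ_C(n) → A_r as n → ∞, where A_r := Σ_{m=0}^∞ W_r(m); that is, Σ_C(n) ∼ A_r / n^r. -/

import Mathlib

open scoped Classical

/-- Cauchy's formula: `p(λ) = ∏_{j=1}^n 1/(j^{λ_j} ⬝ λ_j!)` is the probability that a
uniformly random permutation of `n` letters has cycle structure `λ`, where `λ_j` is the
number of parts of `λ` equal to `j`. -/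
noncomputable def pOf {n : ℕ} (μ : Nat.Partition n) : ℝ :=
  ∏ j ∈ Finset.Icc 1 n,
    1 / ((j : ℝ) ^ (μ.parts.count j) * (Nat.factorial (μ.parts.count j) : ℝ))

/-- `W_r(m) = Σ_{λ ⊢ m} p(λ)^r`: the probability that `r` independent uniformly random
permutations of `m` letters all have the same cycle structure (note `W r 0 = 1`). -/
noncomputable def W (r m : ℕ) : ℝ :=
  ∑ μ : Nat.Partition m, pOf μ ^ r

/-- `a(n) = n^{2/3}/3`. -/
noncomputable def aCut (n : ℕ) : ℝ := (1 / 3) * (n : ℝ) ^ ((2 : ℝ) / 3)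

/-- `Σ_C(n)`: the sum of `p(λ)^r` over all partitions `λ` of `n` whose largest part
`T(λ)` satisfies `n - a(n) ≤ T(λ) ≤ n`. -/
noncomputable def SigmaC (r n : ℕ) : ℝ :=
  ∑ μ ∈ Finset.univ.filter
      (fun μ : Nat.Partition n =>
        (n : ℝ) - aCut n ≤ (μ.parts.sup : ℝ) ∧ (μ.parts.sup : ℝ) ≤ (n : ℝ)),
    pOf μ ^ r

noncomputable def qOf (s : Multiset ℕ) : ℝ :=
  ∏ j ∈ s.toFinset, 1 / ((j : ℝ) ^ (s.count j) * (Nat.factorial (s.count j) : ℝ))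

lemma part_le {n : ℕ} (μ : Nat.Partition n) {j : ℕ} (hj : j ∈ μ.parts) : j ≤ n := by
  have := Multiset.single_le_sum (fun x _ => Nat.zero_le x) j hj
  rwa [μ.parts_sum] at this

lemma pOf_eq_prod {n : ℕ} (μ : Nat.Partition n) (S : Finset ℕ) (hS : μ.parts.toFinset ⊆ S) :
    ∏ j ∈ S, 1 / ((j : ℝ) ^ (μ.parts.count j) * (Nat.factorial (μ.parts.count j) : ℝ))
      = qOf μ.parts := by
  unfold qOf
  symm
  apply Finset.prod_subset hS
  intro j _ hj
  have : μ.parts.count j = 0 := by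
    rw [Multiset.count_eq_zero]; simpa using hj
  simp [this]

lemma pOf_eq {n : ℕ} (μ : Nat.Partition n) : pOf μ = qOf μ.parts := by
  apply pOf_eq_prod
  intro j hj
  rw [Multiset.mem_toFinset] at hj
  exact Finset.mem_Icc.2 ⟨μ.parts_pos hj, part_le μ hj⟩

lemma qOf_cons (t : ℕ) (s : Multiset ℕ) (h : t ∉ s) : qOf (t ::ₘ s) = 1 / (t : ℝ) * qOf s := by
  unfold qOf
  rw [Multiset.toFinset_cons, Finset.prod_insert (by simpa using h)]
  congr 1
  · simp [Multiset.count_eq_zero.2 h]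
  · apply Finset.prod_congr rfl
    intro j hj
    have : j ≠ t := by
      rintro rfl; exact h (by simpa using hj)
    rw [Multiset.count_cons_of_ne this]

lemma sup_mem (s : Multiset ℕ) (h : s ≠ 0) : s.sup ∈ s := by
  induction s using Multiset.induction with
  | empty => exact absurd rfl h
  | cons a s ih =>
    rw [Multiset.sup_cons]
    by_cases hs : s = 0
    · subst hs; simp
    · rcases le_total a s.sup with h1 | h1
      · rw [sup_eq_right.2 h1]; exact Multiset.mem_cons_of_mem (ih hs)
      · rw [sup_eq_left.2 h1]; exact Multiset.mem_cons_self _ _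

lemma pOf_nonneg {n : ℕ} (μ : Nat.Partition n) : 0 ≤ pOf μ := by
  unfold pOf; positivity

lemma W_nonneg (r m : ℕ) : 0 ≤ W r m :=
  Finset.sum_nonneg fun μ _ => pow_nonneg (pOf_nonneg μ) r

lemma W_partial (r : ℕ) (hr : 2 ≤ r) (N : ℕ) :
    ∑ m ∈ Finset.range N, W r m ≤ Real.exp (∑' j : ℕ, 1 / (j : ℝ) ^ r) := by
  set g : ℕ → ℕ → ℝ := fun j c => (1 / ((j : ℝ) ^ c * (Nat.factorial c : ℝ))) ^ r with hg
  have hg0 : ∀ j c, 0 ≤ g j c := fun j c => by simp only [hg]; positivity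
  let e : (Σ m : ℕ, Nat.Partition m) → (Fin N → ℕ) := fun x i => x.2.parts.count (i.1 + 1)
  let S : Finset (Σ m : ℕ, Nat.Partition m) := (Finset.range N).sigma fun m => Finset.univ
  have hp : ∀ x ∈ S, pOf x.2 ^ r = ∏ i : Fin N, g (i.1 + 1) (e x i) := by
    rintro ⟨m, μ⟩ hx
    have hm : m < N := by simpa [S] using hx
    have h1 := pOf_eq_prod μ (Finset.Icc 1 N) (by
      intro j hj
      rw [Multiset.mem_toFinset] at hj
      exact Finset.mem_Icc.2 ⟨μ.parts_pos hj, (part_le μ hj).trans hm.le⟩)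
    have h2 : Finset.Icc 1 N = (Finset.range N).image (· + 1) := by
      ext j; simp only [Finset.mem_Icc, Finset.mem_image, Finset.mem_range]
      constructor
      · rintro ⟨a, b⟩; exact ⟨j - 1, by omega, by omega⟩
      · rintro ⟨a, b, rfl⟩; omega
    rw [h2, Finset.prod_image (by intro a _ b _ h; simpa using h), Finset.prod_range] at h1
    simp only [pOf_eq, ← h1, hg, e, Finset.prod_pow]
  have hinj : Set.InjOn e S := by
    rintro ⟨m, μ⟩ hx ⟨m', μ'⟩ hx' h
    have hm : m < N := by simpa [S] using hx
    have hm' : m' < N := by simpa [S] using hx'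
    have hparts : μ.parts = μ'.parts := by
      ext j
      by_cases hj : 1 ≤ j ∧ j ≤ N
      · have := congrFun h ⟨j - 1, by omega⟩
        simp only [e] at this
        rwa [Nat.sub_add_cancel hj.1] at this
      · rw [Multiset.count_eq_zero.2, Multiset.count_eq_zero.2]
        · intro h; exact hj ⟨μ'.parts_pos h, (part_le μ' h).trans hm'.le⟩
        · intro h; exact hj ⟨μ.parts_pos h, (part_le μ h).trans hm.le⟩
    have : m = m' := by rw [← μ.parts_sum, ← μ'.parts_sum, hparts]
    subst this
    have : μ = μ' := Nat.Partition.ext hparts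
    rw [this]
  have hsub : S.image e ⊆ Fintype.piFinset fun _ : Fin N => Finset.range (N + 1) := by
    intro y hy
    obtain ⟨⟨m, μ⟩, hx, rfl⟩ := Finset.mem_image.1 hy
    have hm : m < N := by simpa [S] using hx
    rw [Fintype.mem_piFinset]
    intro i
    rw [Finset.mem_range]
    have h1 : μ.parts.count (i.1 + 1) ≤ μ.parts.card := Multiset.count_le_card _ _
    have h2 : μ.parts.card ≤ μ.parts.sum := by
      have := Multiset.card_nsmul_le_sum (s := μ.parts) (a := 1) (fun x hx => μ.parts_pos hx)
      simpa using this
    rw [μ.parts_sum] at h2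
    show μ.parts.count (i.1 + 1) < N + 1
    omega
  have hfac : ∀ j : ℕ, ∑ c ∈ Finset.range (N + 1), g j c ≤ Real.exp (1 / (j : ℝ) ^ r) := by
    intro j
    refine le_trans (Finset.sum_le_sum fun c _ => ?_)
      (Real.sum_le_exp_of_nonneg (x := 1 / (j : ℝ) ^ r) (by positivity) (N + 1))
    simp only [hg]
    rw [one_div_pow, one_div_pow, mul_pow, one_div, mul_inv, div_eq_mul_inv, one_div,
      pow_right_comm]
    apply mul_le_mul_of_nonneg_left _ (by positivity)
    have : (1 : ℝ) ≤ (c.factorial : ℝ) := by exact_mod_cast c.factorial_pos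
    exact inv_anti₀ (by positivity) (le_self_pow₀ this (by omega))
  calc ∑ m ∈ Finset.range N, W r m = ∑ x ∈ S, pOf x.2 ^ r := by
        simp only [W, S]; rw [Finset.sum_sigma]
    _ = ∑ x ∈ S, ∏ i : Fin N, g (i.1 + 1) (e x i) := Finset.sum_congr rfl hp
    _ = ∑ y ∈ S.image e, ∏ i : Fin N, g (i.1 + 1) (y i) :=
        (Finset.sum_image (f := fun y : Fin N → ℕ => ∏ i : Fin N, g (i.1 + 1) (y i)) hinj).symm
    _ ≤ ∑ y ∈ Fintype.piFinset fun _ : Fin N => Finset.range (N + 1),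
          ∏ i : Fin N, g (i.1 + 1) (y i) :=
        Finset.sum_le_sum_of_subset_of_nonneg hsub
          fun y _ _ => Finset.prod_nonneg fun i _ => hg0 _ _
    _ = ∏ i : Fin N, ∑ c ∈ Finset.range (N + 1), g (i.1 + 1) c :=
        (Finset.prod_univ_sum _ _).symm
    _ ≤ ∏ i : Fin N, Real.exp (1 / ((i.1 + 1 : ℕ) : ℝ) ^ r) :=
        Finset.prod_le_prod (fun i _ => Finset.sum_nonneg fun c _ => hg0 _ _)
          fun i _ => hfac (i.1 + 1)
    _ = Real.exp (∑ i ∈ Finset.range N, 1 / ((i + 1 : ℕ) : ℝ) ^ r) := by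
        rw [← Real.exp_sum, Finset.sum_range]
    _ ≤ _ := by
        apply Real.exp_le_exp.2
        have hs : Summable fun j : ℕ => 1 / (j : ℝ) ^ r :=
          Real.summable_one_div_nat_pow.2 (by omega)
        have := hs.sum_le_tsum ((Finset.range N).image (· + 1)) (fun j _ => by positivity)
        rwa [Finset.sum_image (by intro a _ b _ h; simpa using h)] at this

lemma W_summable (r : ℕ) (hr : 2 ≤ r) : Summable (W r) :=
  summable_of_sum_range_le (W_nonneg r) (W_partial r hr)

lemma aCut_le (n : ℕ) (hn : 1 ≤ n) : aCut n ≤ n / 3 := by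
  have h1 : (1 : ℝ) ≤ n := by exact_mod_cast hn
  have := Real.rpow_le_rpow_of_exponent_le h1 (show (2 : ℝ) / 3 ≤ 1 by norm_num)
  rw [Real.rpow_one] at this
  unfold aCut; linarith

noncomputable def fTerm (r n m : ℕ) : ℝ :=
  if (m : ℝ) ≤ aCut n then ((n : ℝ) / ((n : ℝ) - m)) ^ r * W r m else 0

lemma three_mul_le {n m : ℕ} (hn : 1 ≤ n) (h : (m : ℝ) ≤ aCut n) : 3 * m ≤ n := by
  have h2 := aCut_le n hn
  have : (3 : ℝ) * m ≤ n := by linarith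
  exact_mod_cast this

lemma sup_cons_eq {n m : ℕ} (hn : 1 ≤ n) (h : 3 * m ≤ n) (ν : Nat.Partition m) :
    ((n - m) ::ₘ ν.parts).sup = n - m := by
  rw [Multiset.sup_cons, sup_eq_left, Multiset.sup_le]
  intro b hb
  have := part_le ν hb
  omega

lemma SigmaC_eq (r n : ℕ) (hn : 1 ≤ n) :
    SigmaC r n = ∑ m ∈ (Finset.range (n + 1)).filter (fun m : ℕ => (m : ℝ) ≤ aCut n),
      ∑ ν : Nat.Partition m, (1 / ((n : ℝ) - m) * pOf ν) ^ r := by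
  rw [Finset.sum_sigma', SigmaC]
  symm
  have key : ∀ x ∈ ((Finset.range (n + 1)).filter (fun m : ℕ => (m : ℝ) ≤ aCut n)).sigma
      (fun m => (Finset.univ : Finset (Nat.Partition m))), 3 * x.1 ≤ n := by
    rintro ⟨m, ν⟩ hx
    simp only [Finset.mem_sigma, Finset.mem_filter] at hx
    exact three_mul_le hn hx.1.2
  refine Finset.sum_bij (fun x hx => (⟨(n - x.1) ::ₘ x.2.parts, ?_, ?_⟩ : Nat.Partition n))
    ?_ ?_ ?_ ?_
  · intro i hi
    have := key x hx
    rcases Multiset.mem_cons.1 hi with h | h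
    · omega
    · exact x.2.parts_pos h
  · have := key x hx
    rw [Multiset.sum_cons, x.2.parts_sum]; omega
  · rintro ⟨m, ν⟩ hx
    have h3 := key _ hx
    simp only [Finset.mem_sigma, Finset.mem_filter] at hx
    dsimp only at h3
    simp only [Finset.mem_filter, Finset.mem_univ, true_and]
    rw [sup_cons_eq hn h3, Nat.cast_sub (by omega)]
    have : (0 : ℝ) ≤ m := by positivity
    exact ⟨by linarith [hx.1.2], by linarith⟩
  · rintro ⟨m, ν⟩ hx ⟨m', ν'⟩ hx' h
    have h3 := key _ hx
    have h3' := key _ hx'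
    dsimp only at h3 h3'
    have hp : (n - m) ::ₘ ν.parts = (n - m') ::ₘ ν'.parts := congrArg Nat.Partition.parts h
    have hs := congrArg Multiset.sup hp
    rw [sup_cons_eq hn h3, sup_cons_eq hn h3'] at hs
    have : m = m' := by omega
    subst this
    have : ν = ν' := Nat.Partition.ext ((Multiset.cons_inj_right _).1 hp)
    rw [this]
  · intro μ hμ
    simp only [Finset.mem_filter, Finset.mem_univ, true_and] at hμ
    have hne : μ.parts ≠ 0 := by
      intro h0
      have := μ.parts_sum
      rw [h0] at this
      simp at this; omega
    have hmem := sup_mem _ hne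
    have hle := part_le μ hmem
    have hcons := Multiset.cons_erase hmem
    have hsum : (μ.parts.erase μ.parts.sup).sum = n - μ.parts.sup := by
      have := congrArg Multiset.sum hcons
      rw [Multiset.sum_cons, μ.parts_sum] at this
      omega
    refine ⟨⟨n - μ.parts.sup, ⟨μ.parts.erase μ.parts.sup,
      fun hi => μ.parts_pos (Multiset.mem_of_mem_erase hi), hsum⟩⟩, ?_, ?_⟩
    · simp only [Finset.mem_sigma, Finset.mem_filter, Finset.mem_univ, and_true, Finset.mem_range]
      refine ⟨by omega, ?_⟩
      rw [Nat.cast_sub hle]; linarith [hμ.1]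
    · apply Nat.Partition.ext
      dsimp only
      rw [Nat.sub_sub_self hle, hcons]
  · rintro ⟨m, ν⟩ hx
    have h3 := key _ hx
    dsimp only at h3 ⊢
    rw [pOf_eq, pOf_eq]
    dsimp only
    rw [qOf_cons, Nat.cast_sub (by omega)]
    intro h
    have := part_le ν h
    omega

lemma SigmaC_tsum (r n : ℕ) (hn : 1 ≤ n) : (n : ℝ) ^ r * SigmaC r n = ∑' m, fTerm r n m := by
  rw [tsum_eq_sum (s := (Finset.range (n + 1)).filter (fun m : ℕ => (m : ℝ) ≤ aCut n)),
    SigmaC_eq r n hn, Finset.mul_sum]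
  · apply Finset.sum_congr rfl
    intro m hm
    rw [Finset.mem_filter] at hm
    rw [fTerm, if_pos hm.2, W, Finset.mul_sum, Finset.mul_sum]
    apply Finset.sum_congr rfl
    intro ν _
    rw [← mul_pow, ← mul_pow]
    congr 1
    ring
  · intro m hm
    rw [fTerm, if_neg]
    intro h
    apply hm
    have := three_mul_le hn h
    simp only [Finset.mem_filter, Finset.mem_range]
    exact ⟨by omega, h⟩

lemma fTerm_bound (r n m : ℕ) (hn : 1 ≤ n) : ‖fTerm r n m‖ ≤ 2 ^ r * W r m := by
  unfold fTerm
  have hW := W_nonneg r m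
  split_ifs with h
  · have h3 : (3 : ℝ) * m ≤ n := by exact_mod_cast three_mul_le hn h
    have h1 : (1 : ℝ) ≤ n := by exact_mod_cast hn
    have hpos : (0 : ℝ) < (n : ℝ) - m := by linarith
    have hq : 0 ≤ (n : ℝ) / ((n : ℝ) - m) := by positivity
    rw [Real.norm_of_nonneg (by positivity)]
    apply mul_le_mul_of_nonneg_right _ hW
    apply pow_le_pow_left₀ hq
    rw [div_le_iff₀ hpos]; linarith
  · simp; positivity

lemma fTerm_tendsto (r m : ℕ) :
    Filter.Tendsto (fun n => fTerm r n m) Filter.atTop (nhds (W r m)) := by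
  have ha : Filter.Tendsto aCut Filter.atTop Filter.atTop := by
    unfold aCut
    exact ((tendsto_rpow_atTop (by norm_num)).comp tendsto_natCast_atTop_atTop).const_mul_atTop
      (by norm_num)
  have h1 : Filter.Tendsto (fun n : ℕ => (n : ℝ) / ((n : ℝ) - m)) Filter.atTop (nhds 1) := by
    have := tendsto_natCast_div_add_atTop (𝕜 := ℝ) (-(m : ℝ))
    simpa [sub_eq_add_neg] using this
  have h2 := (h1.pow r).mul_const (W r m)
  rw [one_pow, one_mul] at h2
  refine h2.congr' ?_
  filter_upwards [ha.eventually_ge_atTop (m : ℝ)] with n hn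
  rw [fTerm, if_pos hn]

theorem stmt_17 (r : ℕ) (hr : 2 ≤ r) :
    Filter.Tendsto (fun n : ℕ => (n : ℝ) ^ r * SigmaC r n) Filter.atTop
      (nhds (∑' m : ℕ, W r m)) := by
  have h := tendsto_tsum_of_dominated_convergence (𝓕 := Filter.atTop) (f := fTerm r) (g := W r)
    (bound := fun m => 2 ^ r * W r m) ((W_summable r hr).mul_left _) (fTerm_tendsto r) (by
      filter_upwards [Filter.eventually_ge_atTop 1] with n hn m
      exact fTerm_bound r n m hn)
  refine h.congr' ?_
  filter_upwards [Filter.eventually_ge_atTop 1] with n hn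
  exact (SigmaC_tsum r n hn).symm
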